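/- arXiv:2008.03916 — 2 statements merged into one kernel-verified Lean document; each statement's English description precedes it below -/
import Mathlib

section
/- For all integers n ≥ 0 and m ≥ 1, the partial sum of equally spaced balancing numbers satisfies ∑_{k=0}^{n} B_{km} = (B_{m(n+1)} − B_{mn} − B_m) / (−2 + 6·B_m − 2·B_{m−1}); equivalently, as an identity of integers, (−2 + 6·B_m − 2·B_{m−1}) · ∑_{k=0}^{n} B_{km} = B_{m(n+1)} − B_{mn} − B_m. -/
/-- The balancing numbers: B₀ = 0, B₁ = 1, Bₙ = 6·Bₙ₋₁ − Bₙ₋₂. -/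
def balancing : ℕ → ℤ
  | 0 => 0
  | 1 => 1
  | n + 2 => 6 * balancing (n + 1) - balancing n

theorem balancing_rec (n : ℕ) : balancing (n + 2) = 6 * balancing (n + 1) - balancing n := by
  rw [balancing]

theorem balancing_add (a b : ℕ) :
    balancing (a + b + 1) = balancing (a + 1) * balancing (b + 1) - balancing a * balancing b := by
  induction a generalizing b with
  | zero => simp [balancing]
  | succ a ih =>
    have h := ih (b + 1)
    have e : a + 1 + b + 1 = a + (b + 1) + 1 := by ring
    rw [e, h, balancing_rec b, balancing_rec a]
    ring

theorem balancing_cassini (p : ℕ) :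
    balancing (p + 1) ^ 2 - 6 * balancing (p + 1) * balancing p + balancing p ^ 2 = 1 := by
  induction p with
  | zero => simp [balancing]
  | succ p ih =>
    rw [balancing_rec p]
    linear_combination ih

theorem balancing_step (a p : ℕ) :
    balancing (a + (p + 1) + (p + 1)) + balancing a =
      (6 * balancing (p + 1) - 2 * balancing p) * balancing (a + (p + 1)) := by
  have h1 := balancing_add a p
  have h2 := balancing_add (a + 1) p
  have h3 := balancing_add (a + (p + 1)) p
  have e1 : a + (p + 1) = a + p + 1 := by ring
  have e2 : a + 1 + p + 1 = a + (p + 1) + 1 := by ring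
  rw [← add_assoc (a + (p + 1)) p 1, h3, ← e2, h2, e1, h1, balancing_rec a]
  linear_combination (-balancing a) * balancing_cassini p

/-- Summation formula for equally spaced balancing numbers, in cleared form:
`(−2 + 6Bₘ − 2Bₘ₋₁) · ∑_{k=0}^{n} B_{km} = B_{m(n+1)} − B_{mn} − Bₘ`. -/
theorem balancing_spaced_sum (n m : ℕ) (hm : 1 ≤ m) :
    (-2 + 6 * balancing m - 2 * balancing (m - 1)) *
        ∑ k ∈ Finset.range (n + 1), balancing (k * m) =
      balancing (m * (n + 1)) - balancing (m * n) - balancing m := by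
  obtain ⟨p, rfl⟩ : ∃ p, m = p + 1 := ⟨m - 1, by omega⟩
  rw [Nat.add_sub_cancel]
  induction n with
  | zero => simp [balancing]
  | succ n ih =>
    rw [Finset.sum_range_succ, mul_add, ih]
    have h := balancing_step ((p + 1) * n) p
    have e1 : (p + 1) * (n + 1 + 1) = (p + 1) * n + (p + 1) + (p + 1) := by ring
    have e2 : (p + 1) * (n + 1) = (p + 1) * n + (p + 1) := by ring
    rw [mul_comm (n + 1) (p + 1), e1, e2]
    linear_combination -h
end

section
/- For all integers n ≥ 0, m ≥ 1 and l ≥ 0, the partial sum of (2l+1)-st powers of equally spaced balancing numbers is given explicitly, as an equality of rational numbers, by ∑_{k=0}^{n} B_{km}^{2l+1} = (1/2^{5l}) · ∑_{s=0}^{l} (-1)^s · C(2l+1, s) · ( B_{(2(l-s)+1)m(n+1)} − B_{(2(l-s)+1)mn} − B_{(2(l-s)+1)m} ) / ( −2 + 6·B_{(2(l-s)+1)m} − 2·B_{(2(l-s)+1)m − 1} ), where each denominator −2 + 6·B_{(2(l-s)+1)m} − 2·B_{(2(l-s)+1)m − 1} is nonzero. -/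
theorem bal_mono (n : ℕ) : 0 ≤ balancing n ∧ balancing n + 1 ≤ balancing (n + 1) := by
  induction n with
  | zero => simp [balancing]
  | succ k ih =>
    have h : balancing (k + 2) = 6 * balancing (k + 1) - balancing k := by rw [balancing]
    have h2 : balancing (k + 1 + 1) = balancing (k + 2) := rfl
    rw [h2, h]
    omega

theorem bal_denom_pos (M : ℕ) (hM : 1 ≤ M) :
    0 < -2 + 6 * balancing M - 2 * balancing (M - 1) := by
  obtain ⟨k, rfl⟩ : ∃ k, M = k + 1 := ⟨M - 1, by omega⟩
  have := bal_mono k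
  rw [Nat.add_sub_cancel]
  omega

theorem bal_binet (n : ℕ) : (balancing n : ℝ) * (4 * √2) =
    (3 + 2 * √2) ^ n - (3 - 2 * √2) ^ n := by
  have hs : √2 * √2 = (2 : ℝ) := Real.mul_self_sqrt (by norm_num)
  induction n using Nat.twoStepInduction with
  | zero => simp [balancing]
  | one => simp [balancing]; ring
  | more k h1 h2 =>
    have h : balancing (k + 2) = 6 * balancing (k + 1) - balancing k := by rw [balancing]
    rw [h]
    push_cast
    have e1 : (3 + 2 * √2) ^ (k + 2) = 6 * (3 + 2 * √2) ^ (k + 1) - (3 + 2 * √2) ^ k := by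
      have : (3 + 2 * √2) ^ 2 = 6 * (3 + 2 * √2) - 1 := by linear_combination 4 * hs
      linear_combination (3 + 2 * √2) ^ k * this
    have e2 : (3 - 2 * √2) ^ (k + 2) = 6 * (3 - 2 * √2) ^ (k + 1) - (3 - 2 * √2) ^ k := by
      have : (3 - 2 * √2) ^ 2 = 6 * (3 - 2 * √2) - 1 := by linear_combination 4 * hs
      linear_combination (3 - 2 * √2) ^ k * this
    rw [e1, e2]
    linear_combination 6 * h2 - h1

theorem root_prod : (3 + 2 * √2) * (3 - 2 * √2) = (1 : ℝ) := by
  have hs : √2 * √2 = (2 : ℝ) := Real.mul_self_sqrt (by norm_num)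
  linear_combination -4 * hs

theorem bal_denom (M : ℕ) (hM : 1 ≤ M) :
    6 * (balancing M : ℝ) - 2 * (balancing (M - 1) : ℝ) =
      (3 + 2 * √2) ^ M + (3 - 2 * √2) ^ M := by
  obtain ⟨k, rfl⟩ : ∃ k, M = k + 1 := ⟨M - 1, by omega⟩
  rw [Nat.add_sub_cancel]
  have hs : √2 * √2 = (2 : ℝ) := Real.mul_self_sqrt (by norm_num)
  have h0 : (4 * √2 : ℝ) ≠ 0 := by positivity
  apply mul_right_cancel₀ h0
  have h1 := bal_binet k
  have h2 := bal_binet (k + 1)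
  have e : (6 * (balancing (k + 1) : ℝ) - 2 * (balancing k : ℝ)) * (4 * √2) =
      6 * ((3 + 2 * √2) ^ (k + 1) - (3 - 2 * √2) ^ (k + 1))
        - 2 * ((3 + 2 * √2) ^ k - (3 - 2 * √2) ^ k) := by
    linear_combination 6 * h2 - 2 * h1
  rw [e, pow_succ, pow_succ]
  linear_combination (-8) * ((3 + 2 * √2) ^ k - (3 - 2 * √2) ^ k) * hs

theorem bal_sum (M n : ℕ) (hM : 1 ≤ M) :
    (∑ k ∈ Finset.range (n + 1), (balancing (M * k) : ℝ)) *
      (-2 + 6 * (balancing M : ℝ) - 2 * (balancing (M - 1) : ℝ)) =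
    balancing (M * (n + 1)) - balancing (M * n) - balancing M := by
  have hd := bal_denom M hM
  induction n with
  | zero => simp [balancing]
  | succ n ih =>
    rw [Finset.sum_range_succ, add_mul, ih]
    have h0 : (4 * √2 : ℝ) ≠ 0 := by positivity
    have e : (-2 + 6 * (balancing M : ℝ) - 2 * (balancing (M - 1) : ℝ)) =
      (3 + 2 * √2) ^ M + (3 - 2 * √2) ^ M - 2 := by linear_combination hd
    rw [e]
    apply mul_right_cancel₀ h0
    have b0 := bal_binet (M * n)
    have b1 := bal_binet (M * (n + 1))
    have b2 := bal_binet (M * (n + 1 + 1))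
    have hp : (3 + 2 * √2) ^ M * (3 - 2 * √2) ^ M = (1 : ℝ) := by
      rw [← mul_pow, root_prod, one_pow]
    simp only [pow_mul] at b0 b1 b2
    generalize (3 + 2 * √2) ^ M = x at *
    generalize (3 - 2 * √2) ^ M = y at *
    linear_combination (-1) * b0 + (x + y) * b1 - b2 + (x ^ n - y ^ n) * hp

theorem odd_pow_lin (x y : ℝ) (h : x * y = 1) (l : ℕ) :
    (x - y) ^ (2 * l + 1) = ∑ s ∈ Finset.range (l + 1),
      (-1 : ℝ) ^ s * (Nat.choose (2 * l + 1) s : ℝ) *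
        (x ^ (2 * (l - s) + 1) - y ^ (2 * (l - s) + 1)) := by
  rw [sub_eq_add_neg, add_pow, show 2 * l + 1 + 1 = (l + 1) + (l + 1) by ring,
    Finset.sum_range_add,
    ← Finset.sum_range_reflect (fun j => x ^ (l + 1 + j) * _ * _) (l + 1),
    ← Finset.sum_add_distrib]
  apply Finset.sum_congr rfl
  intro s hs
  obtain ⟨t, rfl⟩ : ∃ t, l = s + t := ⟨l - s, by have := Finset.mem_range.1 hs; omega⟩
  have a1 : 2 * (s + t) + 1 - s = s + (2 * t + 1) := by omega
  have a2 : s + t + 1 + (s + t + 1 - 1 - s) = s + (2 * t + 1) := by omega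
  have a3 : s + t - s = t := by omega
  have a4 : 2 * (s + t) + 1 - (s + (2 * t + 1)) = s := by omega
  have a5 : (2 * (s + t) + 1).choose (s + (2 * t + 1)) = (2 * (s + t) + 1).choose s := by
    rw [← Nat.choose_symm_of_eq_add]; ring
  rw [a2, a1, a3, a4, a5, neg_pow y s, neg_pow y (s + (2 * t + 1))]
  have hp : x ^ s * y ^ s = 1 := by rw [← mul_pow, h, one_pow]
  have o : (-1 : ℝ) ^ (2 * t + 1) = -1 := by rw [pow_succ, pow_mul]; simp
  rw [pow_add (-1 : ℝ) s, o, pow_add, pow_add]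
  linear_combination
    (-1 : ℝ) ^ s * ((2 * (s + t) + 1).choose s : ℝ) * (x ^ (2 * t + 1) - y ^ (2 * t + 1)) * hp

theorem bal_lin (n l : ℕ) : (balancing n : ℝ) ^ (2 * l + 1) =
    1 / 2 ^ (5 * l) * ∑ s ∈ Finset.range (l + 1),
      (-1 : ℝ) ^ s * (Nat.choose (2 * l + 1) s : ℝ) * balancing ((2 * (l - s) + 1) * n) := by
  have h0 : (4 * √2 : ℝ) ≠ 0 := by positivity
  have hs : √2 ^ 2 = (2 : ℝ) := Real.sq_sqrt (by norm_num)
  have hp : (3 + 2 * √2) ^ n * (3 - 2 * √2) ^ n = (1 : ℝ) := by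
    rw [← mul_pow, root_prod, one_pow]
  have h := odd_pow_lin _ _ hp l
  rw [← bal_binet n, mul_pow] at h
  have e : (4 * √2 : ℝ) ^ (2 * l + 1) = 2 ^ (5 * l) * (4 * √2) := by
    rw [pow_succ, pow_mul, mul_pow, hs, pow_mul]; norm_num
  rw [e] at h
  have h2 : (2 : ℝ) ^ (5 * l) ≠ 0 := by positivity
  rw [one_div, eq_inv_mul_iff_mul_eq₀ h2]
  apply mul_right_cancel₀ h0
  rw [Finset.sum_mul]
  refine Eq.trans (by ring) (h.trans ?_)
  apply Finset.sum_congr rfl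
  intro s _
  rw [mul_assoc _ _ (4 * √2), bal_binet, ← pow_mul, ← pow_mul, mul_comm n]

/-- Explicit formula for partial sums of odd powers of equally spaced balancing numbers,
as an equality of rational numbers; each denominator appearing is nonzero. -/
theorem balancing_sum_odd_powers (n m l : ℕ) (hm : 1 ≤ m) :
    (∀ s ≤ l,
        (-2 + 6 * (balancing ((2 * (l - s) + 1) * m) : ℚ)
          - 2 * (balancing ((2 * (l - s) + 1) * m - 1) : ℚ)) ≠ 0) ∧
    ∑ k ∈ Finset.range (n + 1), ((balancing (k * m) : ℚ)) ^ (2 * l + 1) =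
      1 / 2 ^ (5 * l) *
        ∑ s ∈ Finset.range (l + 1),
          (-1 : ℚ) ^ s * (Nat.choose (2 * l + 1) s : ℚ) *
            ((balancing ((2 * (l - s) + 1) * m * (n + 1)) : ℚ)
              - (balancing ((2 * (l - s) + 1) * m * n) : ℚ)
              - (balancing ((2 * (l - s) + 1) * m) : ℚ)) /
          (-2 + 6 * (balancing ((2 * (l - s) + 1) * m) : ℚ)
            - 2 * (balancing ((2 * (l - s) + 1) * m - 1) : ℚ)) := by
  have hM : ∀ s, 1 ≤ (2 * (l - s) + 1) * m := fun s => Nat.mul_pos (by omega) hm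
  have hD : ∀ s, (-2 + 6 * (balancing ((2 * (l - s) + 1) * m) : ℚ)
          - 2 * (balancing ((2 * (l - s) + 1) * m - 1) : ℚ)) ≠ 0 := by
    intro s
    have := (bal_denom_pos _ (hM s)).ne'
    exact_mod_cast this
  refine ⟨fun s _ => hD s, ?_⟩
  have hDR : ∀ s, (-2 + 6 * (balancing ((2 * (l - s) + 1) * m) : ℝ)
          - 2 * (balancing ((2 * (l - s) + 1) * m - 1) : ℝ)) ≠ 0 := by
    intro s
    have := (bal_denom_pos _ (hM s)).ne'
    exact_mod_cast this
  apply Rat.cast_injective (α := ℝ)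
  push_cast
  simp only [bal_lin]
  rw [← Finset.mul_sum, Finset.sum_comm]
  congr 1
  apply Finset.sum_congr rfl
  intro s _
  rw [← Finset.mul_sum, eq_div_iff (hDR s), mul_assoc, ← bal_sum _ n (hM s)]
  simp only [mul_assoc, mul_comm m]
end
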